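/- arXiv:1911.03994 — 2 statements merged into one kernel-verified Lean document; each statement's English description precedes it below -/
import Mathlib

section
/- Let Γ be an n×n Hermitian positive definite complex matrix and σ² > 0. Then the average MMSE of the real-only equalizer is at most that of the linear equalizer: Re[(σ²/(4ν))·tr((2A(Γ + BΓᵀB)A† + (σ²/2)I)⁻¹)] ≤ Re[(σ²/(2ν))·tr((Γ + σ²I)⁻¹)]. -/
open Matrix ComplexOrder

noncomputable def Amat (ν : ℕ) : Matrix (Fin (2*ν)) (Fin (2*ν)) ℂ :=
  Matrix.diagonal (fun i => if Even (i : ℕ) then (1/2 : ℂ) else -Complex.I/2)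

noncomputable def Bmat (ν : ℕ) : Matrix (Fin (2*ν)) (Fin (2*ν)) ℂ :=
  Matrix.diagonal (fun i => (-1 : ℂ) ^ (i : ℕ))

/-- Matrix inversion is antitone on positive definite matrices. -/
theorem Matrix.PosDef.posSemidef_inv_sub_inv_add {m : Type*} [Fintype m] [DecidableEq m]
    {M P : Matrix m m ℂ} (hM : M.PosDef) (hP : P.PosSemidef) :
    (M⁻¹ - (M + P)⁻¹).PosSemidef := by
  have hN : (M + P).PosDef := hM.add_posSemidef hP
  have hMdet : IsUnit M.det := (Matrix.isUnit_iff_isUnit_det _).mp hM.isUnit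
  have hNdet : IsUnit (M + P).det := (Matrix.isUnit_iff_isUnit_det _).mp hN.isUnit
  have hconj : (P + P * M⁻¹ * P).PosSemidef := by
    refine hP.add ?_
    simpa only [hP.isHermitian.eq] using hM.inv.posSemidef.mul_mul_conjTranspose_same P
  have hexpand : P + P * M⁻¹ * P = (M + P) * M⁻¹ * (M + P) - (M + P) := by
    simp only [Matrix.add_mul, Matrix.mul_add, Matrix.mul_nonsing_inv _ hMdet,
      Matrix.nonsing_inv_mul_cancel_right _ _ hMdet, Matrix.one_mul]
    abel
  have hdiff : M⁻¹ - (M + P)⁻¹ = (M + P)⁻¹ * (P + P * M⁻¹ * P) * ((M + P)⁻¹)ᴴ := by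
    rw [hN.inv.isHermitian.eq, hexpand, Matrix.mul_sub, Matrix.sub_mul,
      Matrix.nonsing_inv_mul _ hNdet, Matrix.one_mul, Matrix.mul_assoc (M + P),
      Matrix.nonsing_inv_mul_cancel_left _ _ hNdet, Matrix.mul_nonsing_inv_cancel_right _ _ hNdet]
  rw [hdiff]
  exact hconj.mul_mul_conjTranspose_same _

theorem Amat_conjTranspose_mul_self (ν : ℕ) : (Amat ν)ᴴ * Amat ν = (1 / 4 : ℂ) • 1 := by
  rw [Amat, diagonal_conjTranspose, diagonal_mul_diagonal, smul_one_eq_diagonal]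
  congr 1
  funext i
  by_cases h : Even (i : ℕ)
  · simp [h]; norm_num
  · simp only [Pi.star_apply, h, if_false]
    simp [Complex.ext_iff]; norm_num

theorem Bmat_conjTranspose (ν : ℕ) : (Bmat ν)ᴴ = Bmat ν := by
  rw [Bmat, diagonal_conjTranspose]
  congr 1
  funext i
  simp

/-- Conjugating by `2 A`, which is unitary, does not change the trace of the inverse. -/
theorem trace_inv_Amat_conj (ν : ℕ) (σ2 : ℂ) (S : Matrix (Fin (2 * ν)) (Fin (2 * ν)) ℂ)
    (hS : IsUnit (S + σ2 • 1).det) :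
    (((2 : ℂ) • (Amat ν * S * (Amat ν)ᴴ) + (σ2 / 2) • 1)⁻¹).trace
      = 2 * ((S + σ2 • 1)⁻¹).trace := by
  have hleft : (Amat ν)ᴴ * Amat ν = (1 / 4 : ℂ) • 1 := Amat_conjTranspose_mul_self ν
  have hright : Amat ν * (Amat ν)ᴴ = (1 / 4 : ℂ) • 1 := by
    rw [← hleft, Amat, diagonal_conjTranspose, diagonal_mul_diagonal, diagonal_mul_diagonal]
    simp only [mul_comm]
  have hsum : (2 : ℂ) • (Amat ν * S * (Amat ν)ᴴ) + (σ2 / 2) • 1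
      = (2 : ℂ) • (Amat ν * (S + σ2 • 1) * (Amat ν)ᴴ) := by
    rw [Matrix.mul_add, Matrix.add_mul, Matrix.mul_smul, Matrix.mul_one, Matrix.smul_mul, hright,
      smul_add, smul_smul, smul_smul]
    congr 2
    ring
  have hinv : ((2 : ℂ) • (Amat ν * (S + σ2 • 1) * (Amat ν)ᴴ))⁻¹
      = (8 : ℂ) • (Amat ν * (S + σ2 • 1)⁻¹ * (Amat ν)ᴴ) := by
    apply Matrix.inv_eq_right_inv
    generalize S + σ2 • 1 = T at hS
    calc (2 : ℂ) • (Amat ν * T * (Amat ν)ᴴ) * (8 : ℂ) • (Amat ν * T⁻¹ * (Amat ν)ᴴ)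
        = (16 : ℂ) • (Amat ν * T * ((Amat ν)ᴴ * Amat ν) * T⁻¹ * (Amat ν)ᴴ) := by
          rw [Matrix.smul_mul, Matrix.mul_smul, smul_smul]
          simp only [Matrix.mul_assoc]
          norm_num
      _ = 1 := by
          rw [hleft, Matrix.mul_smul, Matrix.mul_one, Matrix.smul_mul, Matrix.smul_mul,
            Matrix.mul_nonsing_inv_cancel_right _ _ hS, hright, smul_smul, smul_smul]
          norm_num
  rw [hsum, hinv, trace_smul, trace_mul_comm, ← Matrix.mul_assoc, hleft, Matrix.smul_mul,
    Matrix.one_mul, trace_smul, smul_smul, smul_eq_mul]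
  norm_num

theorem mmse_roe_le_mmse_le (ν : ℕ) (hν : 1 ≤ ν) (σ2 : ℝ) (hσ : 0 < σ2)
    (A B : Matrix (Fin (2*ν)) (Fin (2*ν)) ℂ)
    (hA : A = Amat ν) (hB : B = Bmat ν)
    (Γ : Matrix (Fin (2*ν)) (Fin (2*ν)) ℂ) (hΓ : Γ.PosDef) :
    (((σ2 : ℂ)/(4*ν)) *
      (((2:ℂ) • (A * (Γ + B * Γᵀ * B) * Aᴴ) + ((σ2 : ℂ)/2) • 1)⁻¹).trace).re ≤
    (((σ2 : ℂ)/(2*ν)) * ((Γ + (σ2 : ℂ) • 1)⁻¹).trace).re := by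
  subst hA hB
  have hP : (Bmat ν * Γᵀ * Bmat ν).PosSemidef := by
    simpa only [Bmat_conjTranspose] using
      hΓ.posSemidef.transpose.mul_mul_conjTranspose_same (Bmat ν)
  have hM : (Γ + (σ2 : ℂ) • (1 : Matrix (Fin (2 * ν)) (Fin (2 * ν)) ℂ)).PosDef :=
    hΓ.add (PosDef.one.smul (by exact_mod_cast hσ))
  have hcomm : Γ + Bmat ν * Γᵀ * Bmat ν + (σ2 : ℂ) • 1
      = Γ + (σ2 : ℂ) • 1 + Bmat ν * Γᵀ * Bmat ν := add_right_comm _ _ _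
  have hdet : IsUnit (Γ + Bmat ν * Γᵀ * Bmat ν + (σ2 : ℂ) • 1).det := by
    rw [hcomm]
    exact (Matrix.isUnit_iff_isUnit_det _).mp (hM.add_posSemidef hP).isUnit
  have htrace := (hM.posSemidef_inv_sub_inv_add hP).trace_nonneg
  rw [trace_sub, sub_nonneg] at htrace
  have hcoeff : (0 : ℂ) ≤ (σ2 : ℂ) / (2 * ν) := by
    have : (0 : ℝ) ≤ σ2 / (2 * ν) := by positivity
    exact_mod_cast this
  rw [trace_inv_Amat_conj _ _ _ hdet, hcomm, ← mul_assoc,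
    show (σ2 : ℂ) / (4 * ν) * 2 = σ2 / (2 * ν) by ring]
  exact (Complex.le_def.mp (mul_le_mul_of_nonneg_left htrace hcoeff)).1
end

section
/- Let Γ be an n×n Hermitian complex matrix such that S = BΓᵀB + Γ + σ²I is invertible, and set C = S⁻¹ and D = CB. Then the second widely linear orthogonality condition holds: D*(Γ + σ²I)Γ + C*·(ΓᵀBΓ) = BΓ, where C* and D* denote the entrywise complex conjugates of C and D. -/
open Matrix

/-- The sign matrix with diagonal entries `(-1) ^ i` is an involution. -/
theorem Bmat_mul_self (ν : ℕ) : Bmat ν * Bmat ν = 1 := by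
  rw [Bmat, diagonal_mul_diagonal, ← diagonal_one]
  congr 1
  funext i
  rw [← mul_pow]
  simp

/-- The sign matrix with diagonal entries `(-1) ^ i` is real. -/
theorem Bmat_map_conj (ν : ℕ) : (Bmat ν).map (starRingEnd ℂ) = Bmat ν := by
  rw [Bmat, diagonal_map (map_zero _)]
  simp

theorem wle_second_orthogonality (ν : ℕ) (hν : 1 ≤ ν) (σ2 : ℝ) (hσ : 0 < σ2)
    (B : Matrix (Fin (2*ν)) (Fin (2*ν)) ℂ) (hB : B = Bmat ν)
    (Γ : Matrix (Fin (2*ν)) (Fin (2*ν)) ℂ) (hΓ : Γ.IsHermitian)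
    (hS : IsUnit (B * Γᵀ * B + Γ + (σ2 : ℂ) • 1))
    (C D : Matrix (Fin (2*ν)) (Fin (2*ν)) ℂ)
    (hC : C = (B * Γᵀ * B + Γ + (σ2 : ℂ) • 1)⁻¹)
    (hD : D = C * B) :
    (D.map (starRingEnd ℂ)) * (Γ + (σ2 : ℂ) • 1) * Γ +
      (C.map (starRingEnd ℂ)) * (Γᵀ * B * Γ) = B * Γ := by
  have hBB : B * B = 1 := hB ▸ Bmat_mul_self ν
  have hBc : B.map (starRingEnd ℂ) = B := hB ▸ Bmat_map_conj ν
  have hΓc : Γ.map (starRingEnd ℂ) = Γᵀ := by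
    ext i j
    exact hΓ.apply j i
  have hΓtc : Γᵀ.map (starRingEnd ℂ) = Γ := by
    ext i j
    exact hΓ.apply i j
  have hσc : ((σ2 : ℂ) • (1 : Matrix (Fin (2*ν)) (Fin (2*ν)) ℂ)).map (starRingEnd ℂ)
      = (σ2 : ℂ) • 1 := by
    rw [smul_one_eq_diagonal, diagonal_map (map_zero _)]
    simp
  have hCS : C * (B * Γᵀ * B + Γ + (σ2 : ℂ) • 1) = 1 := by
    rw [hC]
    exact nonsing_inv_mul _ ((isUnit_iff_isUnit_det _).mp hS)
  have hCSc : C.map (starRingEnd ℂ) * (B * Γ * B + Γᵀ + (σ2 : ℂ) • 1) = 1 := by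
    have h := congrArg (fun M => M.map (starRingEnd ℂ)) hCS
    simpa only [Matrix.map_mul, Matrix.map_add _ (map_add (starRingEnd ℂ)), hBc, hΓc, hΓtc, hσc,
      Matrix.map_one _ (map_zero (starRingEnd ℂ)) (map_one (starRingEnd ℂ))] using h
  have hSB : (B * Γ * B + Γᵀ + (σ2 : ℂ) • 1) * (B * Γ)
      = B * (Γ + (σ2 : ℂ) • 1) * Γ + Γᵀ * B * Γ := by
    have h : B * (B * Γ) = Γ := by
      rw [← Matrix.mul_assoc, hBB, Matrix.one_mul]
    simp only [Matrix.add_mul, Matrix.mul_add, h, Matrix.smul_mul, Matrix.mul_smul,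
      Matrix.one_mul, Matrix.mul_one, Matrix.mul_assoc]
    abel
  calc (D.map (starRingEnd ℂ)) * (Γ + (σ2 : ℂ) • 1) * Γ +
        (C.map (starRingEnd ℂ)) * (Γᵀ * B * Γ)
      = C.map (starRingEnd ℂ) * (B * (Γ + (σ2 : ℂ) • 1) * Γ + Γᵀ * B * Γ) := by
        rw [hD, Matrix.map_mul, hBc, Matrix.mul_add (C.map _)]
        simp only [Matrix.mul_assoc]
    _ = B * Γ := by
        rw [← hSB, ← Matrix.mul_assoc, hCSc, Matrix.one_mul]
end
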